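/- Lipschitz score implies bounded posterior covariance: suppose that for some t ≥ 0 with α_t > 0 the map y ↦ ∇ log p_t^fac(y) is L_s-Lipschitz on ℝ^k. Then for every y ∈ ℝ^k the posterior covariance satisfies ‖C_t(y)‖_op ≤ (h_t + σ_max² α_t²)(1 + L_s (h_t + σ_max² α_t²)) / α_t², where ‖·‖_op is the spectral norm. (This uses that the eigenvalues of Γ_t = (βᵀΛ_t⁻¹β)⁻¹ lie in [h_t + σ_d² α_t², h_t + σ_1² α_t²] ⊆ (0, h_t + σ_max² α_t²].) -/

import Mathlib

open MeasureTheory Matrix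

noncomputable section

/-- Euclidean (ℓ²) norm on `Fin n → ℝ`. -/
def eucNorm {n : ℕ} (x : Fin n → ℝ) : ℝ := Real.sqrt (∑ i, x i ^ 2)

/-- The `n`-dimensional Gaussian density `φ(x; μ, S)`. -/
def gaussD (n : ℕ) (x μ : Fin n → ℝ) (S : Matrix (Fin n) (Fin n) ℝ) : ℝ :=
  (2 * Real.pi) ^ (-(n : ℝ) / 2) * S.det ^ (-(1 : ℝ) / 2) *
    Real.exp (-((x - μ) ⬝ᵥ (S⁻¹ *ᵥ (x - μ))) / 2)

/-- Gradient as the vector of partial derivatives. -/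
def gradv {n : ℕ} (f : (Fin n → ℝ) → ℝ) (x : Fin n → ℝ) : Fin n → ℝ :=
  fun i => fderiv ℝ f x (Pi.single i 1)

/-- `α_t = e^{-t/2}`. -/
def af (t : ℝ) : ℝ := Real.exp (-t / 2)

/-- `h_t = 1 - α_t²`. -/
def hf (t : ℝ) : ℝ := 1 - af t ^ 2

/-- `Λ_t = diag(h_t + σ_i² α_t²)`. -/
def Lam {d : ℕ} (σ : Fin d → ℝ) (t : ℝ) : Matrix (Fin d) (Fin d) ℝ :=
  Matrix.diagonal fun i => hf t + σ i ^ 2 * af t ^ 2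

/-- `Λ_t^{-1/2}`. -/
def LamInvSqrt {d : ℕ} (σ : Fin d → ℝ) (t : ℝ) : Matrix (Fin d) (Fin d) ℝ :=
  Matrix.diagonal fun i => (Real.sqrt (hf t + σ i ^ 2 * af t ^ 2))⁻¹

/-- `Γ_t = (βᵀ Λ_t⁻¹ β)⁻¹`. -/
def Gam {d k : ℕ} (β : Matrix (Fin d) (Fin k) ℝ) (σ : Fin d → ℝ) (t : ℝ) :
    Matrix (Fin k) (Fin k) ℝ :=
  (βᵀ * (Lam σ t)⁻¹ * β)⁻¹

/-- `T_t = Λ_t^{-1/2} β Γ_t βᵀ Λ_t^{-1/2}`. -/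
def Tproj {d k : ℕ} (β : Matrix (Fin d) (Fin k) ℝ) (σ : Fin d → ℝ) (t : ℝ) :
    Matrix (Fin d) (Fin d) ℝ :=
  LamInvSqrt σ t * β * Gam β σ t * βᵀ * LamInvSqrt σ t

/-- Time-`t` marginal density `p_t`. -/
def pT {d k : ℕ} (β : Matrix (Fin d) (Fin k) ℝ) (σ : Fin d → ℝ)
    (pfac : (Fin k → ℝ) → ℝ) (t : ℝ) (r : Fin d → ℝ) : ℝ :=
  ∫ f : Fin k → ℝ, gaussD d r (af t • (β *ᵥ f)) (Lam σ t) * pfac f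

/-- Smoothed factor density `p_t^fac`. -/
def pTfac {d k : ℕ} (β : Matrix (Fin d) (Fin k) ℝ) (σ : Fin d → ℝ)
    (pfac : (Fin k → ℝ) → ℝ) (t : ℝ) (y : Fin k → ℝ) : ℝ :=
  ∫ f : Fin k → ℝ, gaussD k y (af t • f) (Gam β σ t) * pfac f

/-- Spectral (ℓ² operator) norm of a real matrix. -/
def opNorm {m n : ℕ} (M : Matrix (Fin m) (Fin n) ℝ) : ℝ :=
  ‖LinearMap.toContinuousLinearMap (Matrix.toEuclideanLin M)‖

/-- Normalizing constant of the posterior density `f ↦ φ(y; α_t f, Γ_t) p_fac(f)`. -/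
def Zt {d k : ℕ} (β : Matrix (Fin d) (Fin k) ℝ) (σ : Fin d → ℝ)
    (pfac : (Fin k → ℝ) → ℝ) (t : ℝ) (y : Fin k → ℝ) : ℝ :=
  ∫ f : Fin k → ℝ, gaussD k y (af t • f) (Gam β σ t) * pfac f

/-- Posterior mean `m_t(y)`. -/
def mT {d k : ℕ} (β : Matrix (Fin d) (Fin k) ℝ) (σ : Fin d → ℝ)
    (pfac : (Fin k → ℝ) → ℝ) (t : ℝ) (y : Fin k → ℝ) : Fin k → ℝ :=
  (Zt β σ pfac t y)⁻¹ •
    ∫ f : Fin k → ℝ, (gaussD k y (af t • f) (Gam β σ t) * pfac f) • f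

/-- Posterior covariance matrix `C_t(y)`. -/
def cT {d k : ℕ} (β : Matrix (Fin d) (Fin k) ℝ) (σ : Fin d → ℝ)
    (pfac : (Fin k → ℝ) → ℝ) (t : ℝ) (y : Fin k → ℝ) : Matrix (Fin k) (Fin k) ℝ :=
  Matrix.of fun i j =>
    (Zt β σ pfac t y)⁻¹ *
      ∫ f : Fin k → ℝ,
        gaussD k y (af t • f) (Gam β σ t) * pfac f *
          ((f i - mT β σ pfac t y i) * (f j - mT β σ pfac t y j))

lemma eucNorm_sq {n : ℕ} (x : Fin n → ℝ) : eucNorm x ^ 2 = x ⬝ᵥ x := by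
  unfold eucNorm
  rw [Real.sq_sqrt (Finset.sum_nonneg fun i _ => sq_nonneg _)]
  simp [dotProduct, sq]

lemma eucNorm_nonneg {n : ℕ} (x : Fin n → ℝ) : 0 ≤ eucNorm x := Real.sqrt_nonneg _

lemma eucNorm_smul {n : ℕ} (s : ℝ) (x : Fin n → ℝ) : eucNorm (s • x) = |s| * eucNorm x := by
  unfold eucNorm
  rw [← Real.sqrt_sq_eq_abs, ← Real.sqrt_mul (sq_nonneg _)]
  congr 1
  simp [Finset.mul_sum, mul_pow]

lemma dot_le_eucNorm {n : ℕ} (x y : Fin n → ℝ) : |x ⬝ᵥ y| ≤ eucNorm x * eucNorm y := by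
  apply abs_le_of_sq_le_sq _ (mul_nonneg (eucNorm_nonneg _) (eucNorm_nonneg _))
  rw [mul_pow, eucNorm_sq, eucNorm_sq]
  have := Finset.sum_mul_sq_le_sq_mul_sq Finset.univ x y
  simpa [dotProduct, sq] using this

lemma norm_sq_le_dot {n : ℕ} (x : Fin n → ℝ) : ‖x‖ ^ 2 ≤ x ⬝ᵥ x := by
  rw [← eucNorm_sq]
  refine pow_le_pow_left₀ (norm_nonneg _) ?_ 2
  rw [pi_norm_le_iff_of_nonneg (eucNorm_nonneg _)]
  intro i
  unfold eucNorm
  apply Real.le_sqrt_of_sq_le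
  rw [Real.norm_eq_abs, sq_abs]
  exact Finset.single_le_sum (f := fun i => x i ^ 2) (fun i _ => sq_nonneg _) (Finset.mem_univ i)

/-- Normalizing constant of the Gaussian. -/
def gN (n : ℕ) (S : Matrix (Fin n) (Fin n) ℝ) : ℝ :=
  (2 * Real.pi) ^ (-(n : ℝ) / 2) * S.det ^ (-(1 : ℝ) / 2)

lemma gN_pos {n : ℕ} {S : Matrix (Fin n) (Fin n) ℝ} (h : 0 < S.det) : 0 < gN n S := by
  unfold gN; positivity

lemma gaussD_eq {n : ℕ} (x μ : Fin n → ℝ) (S : Matrix (Fin n) (Fin n) ℝ) :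
    gaussD n x μ S = gN n S * Real.exp (-((x - μ) ⬝ᵥ (S⁻¹ *ᵥ (x - μ))) / 2) := rfl

lemma gaussD_pos {n : ℕ} {S : Matrix (Fin n) (Fin n) ℝ} (h : 0 < S.det) (x μ : Fin n → ℝ) :
    0 < gaussD n x μ S := by
  rw [gaussD_eq]; have := gN_pos h; positivity

lemma gaussD_le {n : ℕ} {S : Matrix (Fin n) (Fin n) ℝ} (h : 0 < S.det) {c : ℝ}
    (hco : ∀ x, c * (x ⬝ᵥ x) ≤ x ⬝ᵥ (S⁻¹ *ᵥ x)) (hc : 0 < c) (x μ : Fin n → ℝ) :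
    gaussD n x μ S ≤ gN n S * Real.exp (-(c * ‖x - μ‖ ^ 2) / 2) := by
  rw [gaussD_eq]
  have h1 := gN_pos h
  have h2 := hco (x - μ)
  have h3 := mul_le_mul_of_nonneg_left (norm_sq_le_dot (x - μ)) hc.le
  gcongr
  linarith

lemma gaussD_le' {n : ℕ} {S : Matrix (Fin n) (Fin n) ℝ} (h : 0 < S.det) {c : ℝ}
    (hco : ∀ x, c * (x ⬝ᵥ x) ≤ x ⬝ᵥ (S⁻¹ *ᵥ x)) (hc : 0 < c) (x μ : Fin n → ℝ) :
    gaussD n x μ S ≤ gN n S := by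
  refine (gaussD_le h hco hc x μ).trans ?_
  have h1 := gN_pos h
  have : Real.exp (-(c * ‖x - μ‖ ^ 2) / 2) ≤ 1 := by
    rw [Real.exp_le_one_iff]
    have : 0 ≤ c * ‖x - μ‖ ^ 2 := by positivity
    linarith
  nlinarith

lemma gaussD_shift {n : ℕ} {S : Matrix (Fin n) (Fin n) ℝ} (hsym : (S⁻¹)ᵀ = S⁻¹)
    {u v : Fin n → ℝ} (huv : S⁻¹ *ᵥ v = u) (y μ : Fin n → ℝ) (s : ℝ) :
    gaussD n (y + s • v) μ S =
      Real.exp (-s * (u ⬝ᵥ y) - s ^ 2 * (u ⬝ᵥ v) / 2) *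
        (Real.exp (s * (u ⬝ᵥ μ)) * gaussD n y μ S) := by
  rw [gaussD_eq, gaussD_eq]
  rw [mul_left_comm (Real.exp _) (gN n S), mul_left_comm (Real.exp _) (gN n S), ← Real.exp_add,
    ← Real.exp_add]
  congr 2
  have e : y + s • v - μ = (y - μ) + s • v := by abel
  have hs : v ⬝ᵥ (S⁻¹ *ᵥ (y - μ)) = u ⬝ᵥ (y - μ) := by
    rw [dotProduct_mulVec, ← mulVec_transpose, hsym, huv]
  rw [e, mulVec_add, mulVec_smul, huv, add_dotProduct, dotProduct_add, dotProduct_add,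
    smul_dotProduct, smul_dotProduct, hs]
  simp only [dotProduct_smul, smul_eq_mul, dotProduct_sub, sub_dotProduct, dotProduct_comm v u,
    dotProduct_comm y u, dotProduct_comm μ u]
  ring

lemma gaussD_cont {n : ℕ} (S : Matrix (Fin n) (Fin n) ℝ) (y : Fin n → ℝ) (a : ℝ) :
    Continuous fun f => gaussD n y (a • f) S := by
  simp only [gaussD_eq]
  have : Continuous fun f : Fin n → ℝ => (y - a • f) := by fun_prop
  have h2 := this.dotProduct (Continuous.matrix_mulVec (continuous_const (y := S⁻¹)) this)
  fun_prop

/-- The bilinear form `(x, z) ↦ z ⬝ᵥ A x` as a continuous bilinear map. -/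
def bilA {n : ℕ} (A : Matrix (Fin n) (Fin n) ℝ) :
    (Fin n → ℝ) →L[ℝ] (Fin n → ℝ) →L[ℝ] ℝ :=
  (∑ i, (ContinuousLinearMap.proj (R := ℝ) (φ := fun _ : Fin n => ℝ) i).smulRight
      (ContinuousLinearMap.proj (R := ℝ) (φ := fun _ : Fin n => ℝ) i)).comp
    (LinearMap.toContinuousLinearMap (Matrix.mulVecLin A))

lemma bilA_apply {n : ℕ} (A : Matrix (Fin n) (Fin n) ℝ) (x z : Fin n → ℝ) :
    bilA A x z = z ⬝ᵥ (A *ᵥ x) := by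
  simp [bilA, dotProduct, mul_comm]

/-- Derivative of the Gaussian density in its argument. -/
def gD' {n : ℕ} (S : Matrix (Fin n) (Fin n) ℝ) (y μ : Fin n → ℝ) : (Fin n → ℝ) →L[ℝ] ℝ :=
  (gaussD n y μ S * (-1 / 2)) • (bilA S⁻¹ (y - μ) + (bilA S⁻¹).flip (y - μ))

lemma gaussD_hasFDerivAt {n : ℕ} (S : Matrix (Fin n) (Fin n) ℝ) (y μ : Fin n → ℝ) :
    HasFDerivAt (fun y => gaussD n y μ S) (gD' S y μ) y := by
  have h1 : HasFDerivAt (fun y : Fin n → ℝ => y - μ) (ContinuousLinearMap.id ℝ _) y :=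
    (hasFDerivAt_id y).sub_const μ
  have h2 := (bilA S⁻¹).hasFDerivAt_of_bilinear h1 h1
  have h3 := ((h2.const_mul (-1 / 2)).exp).const_mul (gN n S)
  refine (h3.congr_fderiv ?_).congr_of_eventuallyEq (Filter.Eventually.of_forall fun z => ?_)
  · ext z
    have e : gaussD n y μ S = gN n S * Real.exp (-1 / 2 * bilA S⁻¹ (y - μ) (y - μ)) := by
      rw [gaussD_eq, bilA_apply]
      congr 2
      ring
    rw [gD', e]
    simp
    ring
  · simp only [gaussD_eq, bilA_apply]
    congr 2
    ring

lemma mul_exp_bound {c : ℝ} (hc : 0 < c) (r : ℝ) :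
    Real.exp (-(c * r ^ 2) / 2) * r ≤ 1 + 1 / c := by
  have h1 : Real.exp (-(c * r ^ 2) / 2) = (Real.exp (c * r ^ 2 / 2))⁻¹ := by
    rw [← Real.exp_neg]; congr 1; ring
  have h2 := Real.add_one_le_exp (c * r ^ 2 / 2)
  rw [h1, inv_mul_le_iff₀ (Real.exp_pos _)]
  have h3 : (c * r ^ 2 / 2 + 1) * (1 + 1 / c) ≤ Real.exp (c * r ^ 2 / 2) * (1 + 1 / c) := by
    gcongr
  refine le_trans ?_ h3
  have e : (c * r ^ 2 / 2 + 1) * (1 + 1 / c) = c * r ^ 2 / 2 + r ^ 2 / 2 + 1 + 1 / c := by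
    field_simp; ring
  rw [e]
  have : 0 < 1 / c := by positivity
  have : 0 ≤ c * r ^ 2 / 2 := by positivity
  nlinarith [sq_nonneg (r - 1)]

lemma gD'_bound {n : ℕ} {S : Matrix (Fin n) (Fin n) ℝ} (h : 0 < S.det) {c : ℝ}
    (hco : ∀ x, c * (x ⬝ᵥ x) ≤ x ⬝ᵥ (S⁻¹ *ᵥ x)) (hc : 0 < c) (y μ : Fin n → ℝ) :
    ‖gD' S y μ‖ ≤ gN n S * ‖bilA S⁻¹‖ * (1 + 1 / c) := by
  have h0 := gN_pos h
  have h1 := gaussD_pos h y μ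
  have h2 := gaussD_le h hco hc y μ
  have h3 := mul_exp_bound hc ‖y - μ‖
  have h4 : ‖bilA S⁻¹ (y - μ) + (bilA S⁻¹).flip (y - μ)‖ ≤ 2 * (‖bilA S⁻¹‖ * ‖y - μ‖) := by
    refine (norm_add_le _ _).trans ?_
    have a1 := (bilA S⁻¹).le_opNorm (y - μ)
    have a2 := (bilA S⁻¹).flip.le_opNorm (y - μ)
    rw [ContinuousLinearMap.opNorm_flip] at a2
    linarith
  have h5 : ‖gaussD n y μ S * (-1 / 2)‖ = gaussD n y μ S / 2 := by
    rw [Real.norm_eq_abs, abs_mul, abs_of_pos h1]; norm_num; ring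
  rw [gD', norm_smul, h5]
  calc gaussD n y μ S / 2 * ‖bilA S⁻¹ (y - μ) + (bilA S⁻¹).flip (y - μ)‖
      ≤ (gN n S * Real.exp (-(c * ‖y - μ‖ ^ 2) / 2)) / 2 * (2 * (‖bilA S⁻¹‖ * ‖y - μ‖)) := by
        gcongr
    _ = gN n S * ‖bilA S⁻¹‖ * (Real.exp (-(c * ‖y - μ‖ ^ 2) / 2) * ‖y - μ‖) := by ring
    _ ≤ _ := by gcongr

lemma integrable_gauss_mul {n : ℕ} {S : Matrix (Fin n) (Fin n) ℝ} (h : 0 < S.det) {c : ℝ}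
    (hco : ∀ x, c * (x ⬝ᵥ x) ≤ x ⬝ᵥ (S⁻¹ *ᵥ x)) (hc : 0 < c) (y : Fin n → ℝ) (a : ℝ)
    {g : (Fin n → ℝ) → ℝ} (hg : Integrable g) :
    Integrable fun f => gaussD n y (a • f) S * g f := by
  refine hg.bdd_mul (c := gN n S) (gaussD_cont S y a).aestronglyMeasurable
    (Filter.Eventually.of_forall fun f => ?_)
  rw [Real.norm_eq_abs, abs_of_pos (gaussD_pos h _ _)]
  exact gaussD_le' h hco hc _ _

lemma conv_differentiableAt {n : ℕ} {S : Matrix (Fin n) (Fin n) ℝ} (h : 0 < S.det) {c : ℝ}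
    (hco : ∀ x, c * (x ⬝ᵥ x) ≤ x ⬝ᵥ (S⁻¹ *ᵥ x)) (hc : 0 < c) (y : Fin n → ℝ) (a : ℝ)
    {g : (Fin n → ℝ) → ℝ} (hg : Integrable g) (hgc : Continuous g) :
    DifferentiableAt ℝ (fun y => ∫ f, gaussD n y (a • f) S * g f) y := by
  refine (hasFDerivAt_integral_of_dominated_of_fderiv_le (𝕜 := ℝ) (s := Set.univ)
    (F' := fun y f => g f • gD' S y (a • f))
    (bound := fun f => ‖g f‖ * (gN n S * ‖bilA S⁻¹‖ * (1 + 1 / c))) Filter.univ_mem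
    (Filter.Eventually.of_forall fun z => ?_) (integrable_gauss_mul h hco hc y a hg) ?_
    (Filter.Eventually.of_forall fun f z _ => ?_) (hg.norm.mul_const _)
    (Filter.Eventually.of_forall fun f z _ => ?_)).differentiableAt
  · exact (integrable_gauss_mul h hco hc z a hg).aestronglyMeasurable
  · apply Continuous.aestronglyMeasurable
    have := gaussD_cont S y a
    have h1 : Continuous fun f : Fin n → ℝ => (y - a • f) := by fun_prop
    unfold gD'
    exact hgc.smul ((this.mul continuous_const).smul
      (((bilA S⁻¹).continuous.comp h1).add ((bilA S⁻¹).flip.continuous.comp h1)))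
  · rw [norm_smul]
    gcongr
    exact gD'_bound h hco hc _ _
  · exact (gaussD_hasFDerivAt S z (a • f)).mul_const (g f)

lemma conv_pos {n : ℕ} {S : Matrix (Fin n) (Fin n) ℝ} (h : 0 < S.det) {c : ℝ}
    (hco : ∀ x, c * (x ⬝ᵥ x) ≤ x ⬝ᵥ (S⁻¹ *ᵥ x)) (hc : 0 < c) (y : Fin n → ℝ) (a : ℝ)
    {g : (Fin n → ℝ) → ℝ} (hg : Integrable g) (hg0 : ∀ f, 0 ≤ g f) (hg1 : ∫ f, g f = 1) :
    0 < ∫ f, gaussD n y (a • f) S * g f := by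
  have hn : ∀ f, 0 ≤ gaussD n y (a • f) S * g f :=
    fun f => mul_nonneg (gaussD_pos h _ _).le (hg0 f)
  refine lt_of_le_of_ne (integral_nonneg hn) fun h0 => ?_
  have h1 := (integral_eq_zero_iff_of_nonneg hn (integrable_gauss_mul h hco hc y a hg)).1 h0.symm
  have h2 : g =ᵐ[volume] 0 := by
    filter_upwards [h1] with f hf
    simpa [(gaussD_pos h y (a • f)).ne'] using hf
  rw [integral_congr_ae h2] at hg1
  simp at hg1

/-- Second derivative of the log-moment generating function. -/
lemma cgf_second {n : ℕ} {w X : (Fin n → ℝ) → ℝ} (hw : Continuous w) (hw0 : ∀ f, 0 ≤ w f)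
    (hint : ∀ s : ℝ, Integrable fun f => Real.exp (s * X f) * w f) :
    ∃ K' : ℝ → ℝ, (∀ s, HasDerivAt (fun s => Real.log (∫ f, Real.exp (s * X f) * w f)) (K' s) s) ∧
      HasDerivAt K' ((∫ f, (X f - (∫ f, X f * w f) / ∫ f, w f) ^ 2 * w f) / ∫ f, w f) 0 := by
  set μ : Measure (Fin n → ℝ) := volume.withDensity fun f => ENNReal.ofReal (w f) with hμ
  have hI : ∀ g : (Fin n → ℝ) → ℝ, ∫ f, g f ∂μ = ∫ f, g f * w f := by
    intro g
    rw [hμ, integral_withDensity_eq_integral_toReal_smul (by fun_prop) (by simp)]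
    congr 1; ext f
    rw [ENNReal.toReal_ofReal (hw0 f), smul_eq_mul, mul_comm]
  have hS : ProbabilityTheory.integrableExpSet X μ = Set.univ := by
    ext s
    simp only [ProbabilityTheory.integrableExpSet, Set.mem_ofPred_eq, Set.mem_univ, iff_true]
    rw [hμ, integrable_withDensity_iff (by fun_prop) (by simp)]
    simpa [ENNReal.toReal_ofReal (hw0 _)] using hint s
  have hs : ∀ s, s ∈ interior (ProbabilityTheory.integrableExpSet X μ) := by simp [hS]
  have hcgf : ProbabilityTheory.cgf X μ = fun s => Real.log (∫ f, Real.exp (s * X f) * w f) := by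
    ext s; simp only [ProbabilityTheory.cgf, ProbabilityTheory.mgf, hI]
  have hun : μ.real Set.univ = ∫ f, w f := by
    have := hI (fun _ => 1)
    simpa using this
  refine ⟨deriv (ProbabilityTheory.cgf X μ), fun s => ?_, ?_⟩
  · rw [← hcgf]
    exact (ProbabilityTheory.analyticAt_cgf (hs s)).differentiableAt.hasDerivAt
  · have h1 := (ProbabilityTheory.analyticAt_cgf (hs 0)).deriv.differentiableAt.hasDerivAt
    have h2 := ProbabilityTheory.iteratedDeriv_two_cgf_eq_integral (hs 0)
    rw [iteratedDeriv_succ, iteratedDeriv_one] at h2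
    rw [h2, ProbabilityTheory.deriv_cgf_zero (hs 0), hI, hI, hun] at h1
    simpa [ProbabilityTheory.mgf, hI, hun] using h1

lemma gradv_dot {n : ℕ} (F : (Fin n → ℝ) → ℝ) (x v : Fin n → ℝ) :
    fderiv ℝ F x v = gradv F x ⬝ᵥ v := by
  conv_lhs => rw [← Finset.univ_sum_single v]
  rw [map_sum]
  simp only [dotProduct, gradv]
  refine Finset.sum_congr rfl fun i _ => ?_
  have : (Pi.single i (v i) : Fin n → ℝ) = v i • Pi.single i 1 := by
    rw [← Pi.single_smul]; simp
  rw [this, map_smul, smul_eq_mul, mul_comm]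

/-- The variance bound in direction `u = Γ⁻¹ v`. -/
lemma var_bound {n : ℕ} {S : Matrix (Fin n) (Fin n) ℝ} (h : 0 < S.det) {c : ℝ}
    (hco : ∀ x, c * (x ⬝ᵥ x) ≤ x ⬝ᵥ (S⁻¹ *ᵥ x)) (hc : 0 < c) (hsym : (S⁻¹)ᵀ = S⁻¹) (a : ℝ)
    {g : (Fin n → ℝ) → ℝ} (hg : Integrable g) (hgc : Continuous g) (hg0 : ∀ f, 0 ≤ g f)
    (hg1 : ∫ f, g f = 1) {L : ℝ}
    (hlip : ∀ y₁ y₂ : Fin n → ℝ,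
      eucNorm (gradv (fun y => Real.log (∫ f, gaussD n y (a • f) S * g f)) y₁
          - gradv (fun y => Real.log (∫ f, gaussD n y (a • f) S * g f)) y₂)
        ≤ L * eucNorm (y₁ - y₂)) (hL : 0 ≤ L)
    {u v : Fin n → ℝ} (huv : S⁻¹ *ᵥ v = u) (y : Fin n → ℝ) :
    (∫ f, (a * (u ⬝ᵥ f) - (∫ f, (a * (u ⬝ᵥ f)) * (gaussD n y (a • f) S * g f)) /
        ∫ f, gaussD n y (a • f) S * g f) ^ 2 * (gaussD n y (a • f) S * g f)) /
      (∫ f, gaussD n y (a • f) S * g f) ≤ u ⬝ᵥ v + L * (v ⬝ᵥ v) := by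
  set P : (Fin n → ℝ) → ℝ := fun y => ∫ f, gaussD n y (a • f) S * g f with hP
  have hPpos : ∀ y, 0 < P y := fun y => conv_pos h hco hc y a hg hg0 hg1
  set w : (Fin n → ℝ) → ℝ := fun f => gaussD n y (a • f) S * g f with hw
  set X : (Fin n → ℝ) → ℝ := fun f => a * (u ⬝ᵥ f) with hX
  have hsh : ∀ (s : ℝ) f, gaussD n (y + s • v) (a • f) S * g f =
      Real.exp (-s * (u ⬝ᵥ y) - s ^ 2 * (u ⬝ᵥ v) / 2) * (Real.exp (s * X f) * w f) := by
    intro s f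
    rw [gaussD_shift hsym huv]
    simp only [hX, hw, dotProduct_smul, smul_eq_mul]
    ring
  have hint : ∀ s : ℝ, Integrable fun f => Real.exp (s * X f) * w f := by
    intro s
    have h1 := (integrable_gauss_mul h hco hc (y + s • v) a hg).const_mul
      (Real.exp (-s * (u ⬝ᵥ y) - s ^ 2 * (u ⬝ᵥ v) / 2))⁻¹
    refine h1.congr (Filter.Eventually.of_forall fun f => ?_)
    simp only [hsh]
    rw [inv_mul_cancel_left₀ (Real.exp_pos _).ne']
  obtain ⟨K', hK1, hK2⟩ := cgf_second (w := w) (X := X) ((gaussD_cont S y a).mul hgc)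
    (fun f => mul_nonneg (gaussD_pos h _ _).le (hg0 f)) hint
  set V := (∫ f, (X f - (∫ f, X f * w f) / ∫ f, w f) ^ 2 * w f) / ∫ f, w f with hV
  have hpe : ∀ s : ℝ, P (y + s • v) =
      Real.exp (-s * (u ⬝ᵥ y) - s ^ 2 * (u ⬝ᵥ v) / 2) * ∫ f, Real.exp (s * X f) * w f := by
    intro s
    simp only [hP, hsh]
    rw [integral_const_mul]
  have hlog : ∀ s : ℝ, Real.log (P (y + s • v)) =
      (-s * (u ⬝ᵥ y) - s ^ 2 * (u ⬝ᵥ v) / 2) + Real.log (∫ f, Real.exp (s * X f) * w f) := by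
    intro s
    have h1 := hPpos (y + s • v)
    rw [hpe] at h1 ⊢
    rw [Real.log_mul (Real.exp_pos _).ne' (pos_of_mul_pos_right h1 (Real.exp_pos _).le).ne',
      Real.log_exp]
  -- derivative along the line, two ways
  have hd1 : ∀ s : ℝ, HasDerivAt (fun s : ℝ => Real.log (P (y + s • v)))
      (-(u ⬝ᵥ y) - s * (u ⬝ᵥ v) + K' s) s := by
    intro s
    simp only [hlog]
    refine HasDerivAt.add ?_ (hK1 s)
    have e1 : HasDerivAt (fun s : ℝ => -s * (u ⬝ᵥ y)) (-1 * (u ⬝ᵥ y)) s :=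
      (hasDerivAt_id s).neg.mul_const _
    have e2 : HasDerivAt (fun s : ℝ => s ^ 2 * (u ⬝ᵥ v) / 2) (2 * s * (u ⬝ᵥ v) / 2) s := by
      simpa using ((hasDerivAt_pow 2 s).mul_const (u ⬝ᵥ v)).div_const 2
    convert! e1.sub e2 using 1
    ring
  have hd2 : ∀ s : ℝ, HasDerivAt (fun s : ℝ => Real.log (P (y + s • v)))
      (gradv (fun y => Real.log (P y)) (y + s • v) ⬝ᵥ v) s := by
    intro s
    have hdiff : DifferentiableAt ℝ (fun y => Real.log (P y)) (y + s • v) :=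
      (conv_differentiableAt h hco hc (y + s • v) a hg hgc).log (hPpos _).ne'
    have hline : HasDerivAt (fun s : ℝ => y + s • v) v s := by
      simpa using ((hasDerivAt_id s).smul_const v).const_add y
    have := hdiff.hasFDerivAt.comp_hasDerivAt s hline
    rw [gradv_dot] at this
    exact this
  have heq : ∀ s : ℝ, gradv (fun y => Real.log (P y)) (y + s • v) ⬝ᵥ v =
      -(u ⬝ᵥ y) - s * (u ⬝ᵥ v) + K' s := fun s => (hd2 s).unique (hd1 s)
  have hG : HasDerivAt (fun s : ℝ => gradv (fun y => Real.log (P y)) (y + s • v) ⬝ᵥ v)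
      (-(u ⬝ᵥ v) + V) 0 := by
    simp only [heq]
    refine HasDerivAt.add ?_ hK2
    simpa using ((hasDerivAt_id (0 : ℝ)).mul_const (u ⬝ᵥ v)).const_sub (-(u ⬝ᵥ y))
  have hb := hG.le_of_lip' (C := L * (v ⬝ᵥ v)) (by
      rw [← eucNorm_sq]; positivity) (Filter.Eventually.of_forall fun s => by
    rw [← sub_dotProduct, Real.norm_eq_abs, Real.norm_eq_abs]
    refine (dot_le_eucNorm _ _).trans ?_
    have h1 := hlip (y + s • v) (y + (0 : ℝ) • v)
    have h2 : y + s • v - (y + (0 : ℝ) • v) = s • v := by simp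
    rw [h2, eucNorm_smul] at h1
    have h3 := mul_le_mul_of_nonneg_right h1 (eucNorm_nonneg v)
    refine h3.trans (le_of_eq ?_)
    rw [← eucNorm_sq, sub_zero]; ring)
  rw [Real.norm_eq_abs] at hb
  have := (abs_le.1 hb).2
  linarith

lemma opNorm_le_of_quad {n : ℕ} {C : Matrix (Fin n) (Fin n) ℝ} {M : ℝ} (hM : 0 ≤ M)
    (hsym : Cᵀ = C) (h0 : ∀ u, 0 ≤ u ⬝ᵥ (C *ᵥ u)) (h1 : ∀ u, u ⬝ᵥ (C *ᵥ u) ≤ M * (u ⬝ᵥ u)) :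
    opNorm C ≤ M := by
  unfold opNorm
  have hin : ∀ z : EuclideanSpace ℝ (Fin n), (z.ofLp) ⬝ᵥ (z.ofLp) = ‖z‖ ^ 2 := by
    intro z
    rw [EuclideanSpace.norm_sq_eq]
    simp [dotProduct, sq]
  refine ContinuousLinearMap.opNorm_le_of_re_inner_le hM fun x y hx hy => ?_
  have e : inner ℝ (LinearMap.toContinuousLinearMap (Matrix.toEuclideanLin C) x) y =
      y.ofLp ⬝ᵥ (C *ᵥ x.ofLp) := by
    simp [EuclideanSpace.inner_eq_star_dotProduct, Matrix.toLpLin_apply]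
  have hxy := h0 (x.ofLp - y.ofLp)
  have hx1 := h1 x.ofLp
  have hy1 := h1 y.ofLp
  rw [hin, hx] at hx1
  rw [hin, hy] at hy1
  have hs : x.ofLp ⬝ᵥ (C *ᵥ y.ofLp) = y.ofLp ⬝ᵥ (C *ᵥ x.ofLp) := by
    rw [dotProduct_mulVec, ← mulVec_transpose, hsym, dotProduct_comm]
  rw [mulVec_sub, sub_dotProduct, dotProduct_sub, dotProduct_sub, hs] at hxy
  rw [e]
  simp
  linarith

lemma lam_pos {s t : ℝ} (ht : 0 ≤ t) (hs : 0 < s) : 0 < hf t + s ^ 2 * af t ^ 2 := by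
  have h1 : 0 < af t := Real.exp_pos _
  have h2 : af t ≤ 1 := by
    unfold af; rw [Real.exp_le_one_iff]; linarith
  have : 0 ≤ hf t := by unfold hf; nlinarith
  positivity

lemma Minv_facts {d k : ℕ} {β : Matrix (Fin d) (Fin k) ℝ} (hβ : βᵀ * β = 1)
    {σ : Fin d → ℝ} {σmax : ℝ} (hσpos : ∀ i, 0 < σ i) (hσmax : ∀ i, σ i ≤ σmax)
    (hm : 0 < σmax) {t : ℝ} (ht : 0 ≤ t) :
    0 < (Gam β σ t).det ∧ ((Gam β σ t)⁻¹)ᵀ = (Gam β σ t)⁻¹ ∧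
    (∀ x, (hf t + σmax ^ 2 * af t ^ 2)⁻¹ * (x ⬝ᵥ x) ≤ x ⬝ᵥ ((Gam β σ t)⁻¹ *ᵥ x)) ∧
    (∀ x, (Gam β σ t)⁻¹ *ᵥ (Gam β σ t *ᵥ x) = x) := by
  set M : Matrix (Fin k) (Fin k) ℝ := βᵀ * (Lam σ t)⁻¹ * β with hM
  have hlam : ∀ i, 0 < hf t + σ i ^ 2 * af t ^ 2 := fun i => lam_pos ht (hσpos i)
  have hl : 0 < hf t + σmax ^ 2 * af t ^ 2 := lam_pos ht hm
  have hinv : (Lam σ t)⁻¹ = Matrix.diagonal fun i => (hf t + σ i ^ 2 * af t ^ 2)⁻¹ := by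
    apply Matrix.inv_eq_left_inv
    rw [Lam, Matrix.diagonal_mul_diagonal, ← Matrix.diagonal_one]
    congr 1; ext i
    exact inv_mul_cancel₀ (hlam i).ne'
  have hsym : Mᵀ = M := by
    rw [hM, Matrix.transpose_mul, Matrix.transpose_mul, hinv, Matrix.diagonal_transpose,
      Matrix.transpose_transpose, Matrix.mul_assoc]
  have hco : ∀ x, (hf t + σmax ^ 2 * af t ^ 2)⁻¹ * (x ⬝ᵥ x) ≤ x ⬝ᵥ (M *ᵥ x) := by
    intro x
    have e1 : x ⬝ᵥ (M *ᵥ x) = (β *ᵥ x) ⬝ᵥ ((Lam σ t)⁻¹ *ᵥ (β *ᵥ x)) := by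
      rw [hM, ← Matrix.mulVec_mulVec, ← Matrix.mulVec_mulVec, dotProduct_mulVec,
        vecMul_transpose]
    have e2 : x ⬝ᵥ x = (β *ᵥ x) ⬝ᵥ (β *ᵥ x) := by
      have := dotProduct_mulVec x βᵀ (β *ᵥ x)
      rwa [vecMul_transpose, Matrix.mulVec_mulVec, hβ, Matrix.one_mulVec] at this
    rw [e1, e2, hinv]
    simp only [dotProduct, Matrix.mulVec_diagonal, Finset.mul_sum]
    refine Finset.sum_le_sum fun i _ => ?_
    have h1 : (hf t + σmax ^ 2 * af t ^ 2)⁻¹ ≤ (hf t + σ i ^ 2 * af t ^ 2)⁻¹ := by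
      apply inv_anti₀ (hlam i)
      have := hσmax i
      have := hσpos i
      gcongr
    have h2 := mul_le_mul_of_nonneg_right h1 (mul_self_nonneg ((β *ᵥ x) i))
    linarith
  have hpd : M.PosDef := by
    refine Matrix.PosDef.of_dotProduct_mulVec_pos ?_ ?_
    · rw [Matrix.IsHermitian, Matrix.conjTranspose_eq_transpose_of_trivial, hsym]
    · intro x hx
      simp only [star_trivial]
      refine lt_of_lt_of_le ?_ (hco x)
      have : 0 < x ⬝ᵥ x := by
        have h1 := norm_sq_le_dot x
        have := norm_pos_iff.2 hx
        have : 0 < ‖x‖ ^ 2 := by positivity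
        linarith
      positivity
  have hdet := hpd.det_pos
  have hu : IsUnit M.det := hdet.ne'.isUnit
  have hG : Gam β σ t = M⁻¹ := rfl
  have hGi : (Gam β σ t)⁻¹ = M := by rw [hG, Matrix.nonsing_inv_nonsing_inv _ hu]
  refine ⟨?_, ?_, ?_, ?_⟩
  · rw [hG]; exact hpd.inv.det_pos
  · rw [hGi, hsym]
  · rw [hGi]; exact hco
  · intro x
    rw [hGi, hG, Matrix.mulVec_mulVec, Matrix.mul_nonsing_inv _ hu, Matrix.one_mulVec]

/-- Lipschitz score implies bounded posterior covariance. -/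
theorem lipschitz_score_bounded_posterior_covariance
    (d k : ℕ) (hk1 : 1 ≤ k) (hkd : k ≤ d)
    (β : Matrix (Fin d) (Fin k) ℝ) (hβ : βᵀ * β = 1)
    (pfac : (Fin k → ℝ) → ℝ)
    (hpfac_nonneg : ∀ f, 0 ≤ pfac f)
    (hpfac_prob : (∫ f : Fin k → ℝ, pfac f) = 1)
    (hpfac_smooth : ContDiff ℝ 2 pfac)
    (hpfac_mom : Integrable (fun f : Fin k → ℝ => eucNorm f ^ 2 * pfac f))
    (σ : Fin d → ℝ) (σmax : ℝ)
    (hσpos : ∀ i, 0 < σ i)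
    (hσdec : ∀ i j : Fin d, i ≤ j → σ j ≤ σ i)
    (hσmax : ∀ i, σ i ≤ σmax)
    (B C₁ C₂ : ℝ) (hB : 0 < B) (hC₁ : 0 < C₁) (hC₂ : 0 < C₂)
    (htail : ∀ f : Fin k → ℝ, B ≤ eucNorm f →
      pfac f ≤ (2 * Real.pi) ^ (-(k : ℝ) / 2) * C₁ * Real.exp (-C₂ * eucNorm f ^ 2 / 2))
    (t : ℝ) (htnn : 0 ≤ t) (hαpos : 0 < af t)
    (Ls : ℝ)
    (hlip : ∀ y₁ y₂ : Fin k → ℝ,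
      eucNorm (gradv (fun y => Real.log (pTfac β σ pfac t y)) y₁
          - gradv (fun y => Real.log (pTfac β σ pfac t y)) y₂)
        ≤ Ls * eucNorm (y₁ - y₂)) :
    ∀ y : Fin k → ℝ,
      opNorm (cT β σ pfac t y)
        ≤ (hf t + σmax ^ 2 * af t ^ 2) * (1 + Ls * (hf t + σmax ^ 2 * af t ^ 2)) / af t ^ 2 := by
  intro y
  have hd : 0 < d := by omega
  have hm : 0 < σmax := (hσpos ⟨0, hd⟩).trans_le (hσmax _)
  obtain ⟨hdet, hsym, hco, hGi⟩ := Minv_facts hβ hσpos hσmax hm htnn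
  set lam := hf t + σmax ^ 2 * af t ^ 2 with hlam
  have hl : 0 < lam := lam_pos htnn hm
  have hli : 0 < lam⁻¹ := inv_pos.2 hl
  have hg : Integrable pfac := by
    by_contra hcon
    rw [integral_undef hcon] at hpfac_prob
    norm_num at hpfac_prob
  have hgc : Continuous pfac := hpfac_smooth.continuous
  have hL : 0 ≤ Ls := by
    have h1 := (eucNorm_nonneg _).trans (hlip (fun _ => 1) 0)
    have h2 : 0 < eucNorm ((fun _ => 1 : Fin k → ℝ) - 0) := by
      simp only [sub_zero, eucNorm]
      apply Real.sqrt_pos.2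
      simp; omega
    exact nonneg_of_mul_nonneg_left h1 h2
  set a := af t with ha
  set S := Gam β σ t with hS
  set w : (Fin k → ℝ) → ℝ := fun f => gaussD k y (a • f) S * pfac f with hw
  have hwint : Integrable w := integrable_gauss_mul hdet hco hli y a hg
  have hZpos : 0 < ∫ f, w f := conv_pos hdet hco hli y a hg hpfac_nonneg hpfac_prob
  have hw0 : ∀ f, 0 ≤ w f := fun f => mul_nonneg (gaussD_pos hdet _ _).le (hpfac_nonneg f)
  have hZ : Zt β σ pfac t y = ∫ f, w f := rfl
  set Z := ∫ f, w f with hZdef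
  set m := mT β σ pfac t y with hmdef
  have habs : ∀ (f : Fin k → ℝ) i, |f i| ≤ eucNorm f := fun f i =>
    Real.abs_le_sqrt (Finset.single_le_sum (f := fun i => f i ^ 2)
      (fun i _ => sq_nonneg _) (Finset.mem_univ i))
  have hint2 : ∀ i j, Integrable fun f : Fin k → ℝ => w f * (f i * f j) := by
    intro i j
    have h1 : Integrable fun f : Fin k → ℝ => (f i * f j) * pfac f := by
      refine hpfac_mom.mono' ?_ (Filter.Eventually.of_forall fun f => ?_)
      · exact (by fun_prop : Continuous fun f : Fin k → ℝ => (f i * f j) * pfac f).aestronglyMeasurable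
      · rw [Real.norm_eq_abs, abs_mul, abs_mul, abs_of_nonneg (hpfac_nonneg f), sq]
        have := hpfac_nonneg f
        have := eucNorm_nonneg f
        gcongr
        · exact habs f i
        · exact habs f j
    refine (integrable_gauss_mul hdet hco hli y a h1).congr
      (Filter.Eventually.of_forall fun f => ?_)
    simp only [hw]; ring
  have hint1 : ∀ i, Integrable fun f : Fin k → ℝ => w f * f i := by
    intro i
    have hwc : Continuous w := (gaussD_cont S y a).mul hgc
    refine (hwint.add (hint2 i i)).mono' ?_ (Filter.Eventually.of_forall fun f => ?_)
    · exact (by fun_prop : Continuous fun f : Fin k → ℝ => w f * f i).aestronglyMeasurable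
    · rw [Real.norm_eq_abs, abs_mul, abs_of_nonneg (hw0 f)]
      have h1 : |f i| ≤ 1 + f i * f i := by
        rw [abs_le]; constructor <;> nlinarith [sq_nonneg (f i - 1), sq_nonneg (f i + 1)]
      have := mul_le_mul_of_nonneg_left h1 (hw0 f)
      simp only [Pi.add_apply]
      linarith
  have hmi : ∀ i, m i = Z⁻¹ * ∫ f, w f * f i := by
    intro i
    rw [hmdef, mT, hZ, Pi.smul_apply, smul_eq_mul]
    congr 1
    exact eval_integral (fun i => hint1 i) i
  have hintc : ∀ i j, Integrable fun f : Fin k → ℝ => w f * ((f i - m i) * (f j - m j)) := by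
    intro i j
    have := (((hint2 i j).sub ((hint1 i).mul_const (m j))).sub ((hint1 j).mul_const (m i))).add
      (hwint.mul_const (m i * m j))
    refine this.congr (Filter.Eventually.of_forall fun f => ?_)
    simp only [Pi.add_apply, Pi.sub_apply]
    ring
  have hquad : ∀ u : Fin k → ℝ, u ⬝ᵥ (cT β σ pfac t y *ᵥ u) =
      Z⁻¹ * ∫ f, w f * (u ⬝ᵥ (f - m)) ^ 2 := by
    intro u
    have e1 : ∀ f : Fin k → ℝ, w f * (u ⬝ᵥ (f - m)) ^ 2 =
        ∑ i, ∑ j, (u i * u j) * (w f * ((f i - m i) * (f j - m j))) := by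
      intro f
      rw [sq, dotProduct, Finset.sum_mul_sum, Finset.mul_sum]
      refine Finset.sum_congr rfl fun i _ => ?_
      rw [Finset.mul_sum]
      refine Finset.sum_congr rfl fun j _ => ?_
      simp only [Pi.sub_apply]
      ring
    simp only [e1]
    rw [integral_finsetSum _ fun i _ => integrable_finsetSum _ fun j _ => (hintc i j).const_mul _]
    simp only [dotProduct, mulVec, Finset.mul_sum]
    refine Finset.sum_congr rfl fun i _ => ?_
    rw [integral_finsetSum _ fun j _ => (hintc i j).const_mul _, Finset.mul_sum]
    refine Finset.sum_congr rfl fun j _ => ?_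
    rw [integral_const_mul]
    have : cT β σ pfac t y i j = Z⁻¹ * ∫ f, w f * ((f i - m i) * (f j - m j)) := rfl
    rw [this]
    ring
  have hapos : 0 < a ^ 2 := by positivity
  apply opNorm_le_of_quad
  · positivity
  · ext i j
    simp only [Matrix.transpose_apply, cT, Matrix.of_apply]
    congr 2; ext f; ring
  · intro u
    rw [hquad]
    refine mul_nonneg (inv_nonneg.2 hZpos.le) (integral_nonneg fun f => ?_)
    exact mul_nonneg (hw0 f) (sq_nonneg _)
  · intro u
    have key := var_bound hdet hco hli hsym a hg hgc hpfac_nonneg hpfac_prob hlip hL (hGi u) y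
    set v := S *ᵥ u with hv
    have hum : u ⬝ᵥ m = Z⁻¹ * ∫ f, (u ⬝ᵥ f) * w f := by
      have e1 : ∀ f : Fin k → ℝ, (u ⬝ᵥ f) * w f = ∑ i, u i * (w f * f i) := by
        intro f
        rw [dotProduct, Finset.sum_mul]
        exact Finset.sum_congr rfl fun i _ => by ring
      simp only [e1]
      rw [integral_finsetSum _ fun i _ => (hint1 i).const_mul _, dotProduct, Finset.mul_sum]
      refine Finset.sum_congr rfl fun i _ => ?_
      rw [hmi, integral_const_mul]; ring
    have hmean : (∫ f, (a * (u ⬝ᵥ f)) * w f) / Z = a * (u ⬝ᵥ m) := by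
      simp only [mul_assoc]
      rw [integral_const_mul, hum]
      ring
    have hV : (∫ f, (a * (u ⬝ᵥ f) - a * (u ⬝ᵥ m)) ^ 2 * w f) / Z =
        a ^ 2 * (u ⬝ᵥ (cT β σ pfac t y *ᵥ u)) := by
      rw [hquad, ← mul_assoc, mul_comm (a ^ 2), mul_assoc, ← integral_const_mul, div_eq_inv_mul]
      congr 2; ext f
      rw [dotProduct_sub]; ring
    change (∫ f, (a * (u ⬝ᵥ f) - (∫ f, (a * (u ⬝ᵥ f)) * w f) / Z) ^ 2 * w f) / Z ≤ _ at key
    rw [hmean, hV] at key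
    -- bounds on v
    have hvv := hco v
    rw [hGi u, dotProduct_comm v u, ← eucNorm_sq] at hvv
    have hcs := (le_abs_self _).trans (dot_le_eucNorm u v)
    have hnu := eucNorm_nonneg u
    have hnv := eucNorm_nonneg v
    have hvl : eucNorm v ≤ lam * eucNorm u := by
      have h1 : eucNorm v ^ 2 ≤ lam * (eucNorm u * eucNorm v) := by
        rw [inv_mul_le_iff₀ hl] at hvv
        exact hvv.trans (by gcongr)
      rcases hnv.eq_or_lt with h0 | h0
      · rw [← h0]; positivity
      · by_contra hcon
        push Not at hcon
        nlinarith
    have huv : u ⬝ᵥ v ≤ lam * (u ⬝ᵥ u) := by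
      rw [← eucNorm_sq u]
      calc u ⬝ᵥ v ≤ eucNorm u * eucNorm v := hcs
        _ ≤ eucNorm u * (lam * eucNorm u) := by gcongr
        _ = _ := by ring
    have hv2 : v ⬝ᵥ v ≤ lam ^ 2 * (u ⬝ᵥ u) := by
      rw [← eucNorm_sq u, ← eucNorm_sq v, ← mul_pow]
      gcongr
    have h3 := mul_le_mul_of_nonneg_left hv2 hL
    rw [div_mul_eq_mul_div, le_div_iff₀ hapos]
    calc u ⬝ᵥ (cT β σ pfac t y *ᵥ u) * a ^ 2 ≤ u ⬝ᵥ v + Ls * (v ⬝ᵥ v) := by linarith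
      _ ≤ lam * (u ⬝ᵥ u) + Ls * (lam ^ 2 * (u ⬝ᵥ u)) := by linarith
      _ = _ := by ring
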